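/- Let A be a countable commutative ring and x ∈ A. Then there exists an ideal p ⊆ A which is radical, x-prime (1 ∈ p implies x is nilpotent, and ab ∈ p together with (b ∈ p → x nilpotent) implies a ∈ p), x-stable (((a ∈ p → x nilpotent) → x nilpotent) → a ∈ p), and such that x ∈ p if and only if x is nilpotent. -/

import Mathlib

/-- For a countable commutative ring `A` and `x ∈ A`, there is an ideal `p`
which is radical, `x`-prime, `x`-stable, and contains `x` iff `x` is
nilpotent. Negation is interpreted as implication to `x` being nilpotent. -/
theorem exists_x_prime_ideal {A : Type*} [CommRing A] [Countable A] (x : A) :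
    ∃ p : Ideal A,
      (∀ (a : A) (k : ℕ), a ^ k ∈ p → a ∈ p) ∧
      ((1 : A) ∈ p → IsNilpotent x) ∧
      (∀ a b : A, a * b ∈ p → (b ∈ p → IsNilpotent x) → a ∈ p) ∧
      (∀ a : A, ((a ∈ p → IsNilpotent x) → IsNilpotent x) → a ∈ p) ∧
      (x ∈ p ↔ IsNilpotent x) := by
  by_cases hx : IsNilpotent x
  · exact ⟨⊤, by simp, fun _ => hx, by simp, by simp, by simp [hx]⟩
  · have h : ∃ p : Ideal A, p.IsPrime ∧ x ∉ p := by
      by_contra hcon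
      push Not at hcon
      exact hx (nilpotent_iff_mem_prime.2 hcon)
    obtain ⟨p, hp, hxp⟩ := h
    refine ⟨p, fun a k hk => hp.mem_of_pow_mem k hk, fun h1 => ?_, fun a b hab hb => ?_,
      fun a ha => ?_, fun h => absurd h hxp, fun h => absurd h hx⟩
    · exact absurd (p.mul_mem_left x h1) (by simpa using hxp)
    · exact (hp.mem_or_mem hab).resolve_right fun h => hx (hb h)
    · by_contra hap
      exact hx (ha fun h => absurd h hap)
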